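/- The skew-symmetric part of the infinitesimal of an associative deformation of a commutative algebra is a Poisson bracket: let A be a commutative associative K-algebra and (α_r) an associative formal deformation of A. Define β(a,b) = α₁(a,b) − α₁(b,a). Then β is skew-symmetric, satisfies the Leibniz rule β(a, b·c) = β(a,b)·c + b·β(a,c) for all a,b,c ∈ A, and satisfies the Jacobi identity β(β(a,b),c) + β(β(b,c),a) + β(β(c,a),b) = 0 for all a,b,c ∈ A. -/

import Mathlib

/-- The skew-symmetric part `β(a,b) = α₁(a,b) − α₁(b,a)` of the infinitesimal of a
formal deformation `(α_r)`. -/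
def skewPart {K A : Type*} [CommRing K] [Ring A] [Algebra K A]
    (α : ℕ → A →ₗ[K] A →ₗ[K] A) (a b : A) : A :=
  α 1 a b - α 1 b a

/-- the skew-symmetric part of the infinitesimal of an associative
formal deformation of a commutative algebra is a Poisson bracket: it is
skew-symmetric, satisfies the Leibniz rule and the Jacobi identity. -/
theorem skew_infinitesimal_is_poisson_bracket
    {K A : Type*} [CommRing K] [CommRing A] [Algebra K A]
    (α : ℕ → A →ₗ[K] A →ₗ[K] A)
    (hα0 : ∀ a b : A, α 0 a b = a * b)
    (hassoc : ∀ k, 1 ≤ k → ∀ a₁ a₂ a₃ : A,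
      ∑ s ∈ Finset.range (k + 1),
        (α (k - s) (α s a₁ a₂) a₃ - α (k - s) a₁ (α s a₂ a₃)) = 0) :
    (∀ a b : A, skewPart α a b = - skewPart α b a) ∧
    (∀ a b c : A, skewPart α a (b * c) = skewPart α a b * c + b * skewPart α a c) ∧
    (∀ a b c : A,
      skewPart α (skewPart α a b) c + skewPart α (skewPart α b c) a
        + skewPart α (skewPart α c a) b = 0) := by
  have h1 : ∀ a b c : A, α 1 (a * b) c - α 1 a (b * c)
      + (α 1 a b * c - a * α 1 b c) = 0 := by
    intro a b c
    have h := hassoc 1 le_rfl a b c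
    simp [Finset.sum_range_succ, hα0] at h
    linear_combination h
  have h2 : ∀ a b c : A, α 2 (a * b) c - α 2 a (b * c)
      + (α 1 (α 1 a b) c - α 1 a (α 1 b c))
      + (α 2 a b * c - a * α 2 b c) = 0 := by
    intro a b c
    have h := hassoc 2 (by norm_num) a b c
    simp [Finset.sum_range_succ, hα0] at h
    linear_combination h
  refine ⟨fun a b => by simp [skewPart], fun a b c => ?_, fun a b c => ?_⟩
  · have e1 := h1 a b c
    have e2 := h1 b a c
    have e3 := h1 b c a
    rw [mul_comm b a] at e2
    rw [mul_comm c a] at e3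
    simp only [skewPart]
    linear_combination -e1 + e2 - e3
  · have e1 := h2 a b c
    have e2 := h2 b c a
    have e3 := h2 c a b
    have e4 := h2 b a c
    have e5 := h2 a c b
    have e6 := h2 c b a
    rw [mul_comm b a] at e4
    rw [mul_comm c a] at e3 e2
    rw [mul_comm c b] at e5 e6
    rw [mul_comm b a] at e6
    simp only [skewPart, map_sub, LinearMap.sub_apply]
    linear_combination e1 + e2 + e3 - e4 - e5 - e6
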